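/- arXiv:math/0604412 — 3 statements merged into one kernel-verified Lean document; each statement's English description precedes it below -/
import Mathlib

section
/- Let h : 𝒯 → 𝒜 be a homology theory that reflects isomorphisms, is full, and satisfies: for any short exact sequence 0 → x → y → z → 0 in 𝒜 with x ≅ h(X) and z ≅ h(Z) for some objects X, Z of 𝒯, there is an object Y of 𝒯 with h(Y) ≅ y. Then for all objects X, Y of 𝒯 there is a short exact sequence of abelian groups 0 → Ext¹_𝒜(h(X)[1], h(Y)) → Hom_𝒯(X,Y) → Hom_𝒜(h(X), h(Y)) → 0, where the right-hand map is f ↦ h(f); that is, f ↦ h(f) is a surjective group homomorphism whose kernel is isomorphic to Ext¹_𝒜(h(X)[1], h(Y)). -/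
open CategoryTheory Category Limits Pretriangulated

universe w

variable {T : Type*} [Category T] [HasZeroObject T] [Preadditive T] [HasShift T ℤ]
  [∀ n : ℤ, (shiftFunctor T n).Additive] [Pretriangulated T]
variable {A : Type*} [Category A] [Abelian A] [HasShift A ℤ]
  [∀ n : ℤ, (shiftFunctor A n).Additive]

/-- The group homomorphism `Hom_𝒯(X,Y) →+ Hom_𝒜(h(X),h(Y))`, `f ↦ h(f)`. -/
def homologyMapHom (h : T ⥤ A) [h.Additive] (X Y : T) :
    (X ⟶ Y) →+ (h.obj X ⟶ h.obj Y) :=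
  AddMonoidHom.mk' (fun f => h.map f) (fun _ _ => h.map_add)

/-!
If `h(f) = 0` for `f : X ⟶ Y`, then also `h(f⟦1⟧) = 0`, so a distinguished triangle
`X ⟶ Y ⟶ C ⟶ X⟦1⟧` on `f` yields an extension `0 ⟶ h(Y) ⟶ h(C) ⟶ h(X⟦1⟧) ⟶ 0`, whose class
depends only on `f`.  The class is natural in `f`, hence additive, both summands of `f + g` being
restrictions of `X ⊞ X ⟶ Y`.  If it vanishes, a retraction of `h(Y) ⟶ h(C)` lifts to a map
`C ⟶ Y` which is invertible on `Y`, so that `Y ⟶ C` is a monomorphism and `f = 0`.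
Conversely, the middle term of an extension of `h(X⟦1⟧)` by `h(Y)` is some `h(C)`, its inclusion
lifts to `Y ⟶ C`, and the fibre `X' ⟶ Y` of that lift has a class from which the given one is
restricted along some `X ⟶ X'`.
-/

section YonedaExtension

open DerivedCategory

variable {C : Type*} [Category C] [Abelian C]

section DerivedCategory

variable [HasDerivedCategory C]

theorem singleFunctor_hom_shift_eq_zero {X Y : C} {n : ℤ}
    (f : (singleFunctor C 0).obj X ⟶ ((singleFunctor C 0).obj Y)⟦n⟧) (hn : n < 0) : f = 0 :=
  have : TStructure.t.IsGE (((singleFunctor C 0).obj Y)⟦n⟧) (-n) :=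
    TStructure.t.isGE_shift _ 0 n (-n) (by lia)
  TStructure.t.zero f 0 (-n) (by lia)

theorem shortExact_of_distTriang_singleFunctor {S : ShortComplex C}
    {δ : (singleFunctor C 0).obj S.X₃ ⟶ ((singleFunctor C 0).obj S.X₁)⟦(1 : ℤ)⟧}
    (hT : Triangle.mk ((singleFunctor C 0).map S.f) ((singleFunctor C 0).map S.g) δ ∈
      distTriang (DerivedCategory C)) : S.ShortExact := by
  have hker := Triangulated.AbelianSubcategory.isLimitKernelForkOfDistTriang
    (fun _ _ _ => singleFunctor_hom_shift_eq_zero) S.f S.g δ hT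
  have hcoker := Triangulated.AbelianSubcategory.isColimitCokernelCoforkOfDistTriang
    (fun _ _ _ => singleFunctor_hom_shift_eq_zero) S.f S.g δ hT
  exact .mk' (S.exact_of_f_is_kernel hker) (Fork.IsLimit.mono hker) (Cofork.IsColimit.epi hcoker)

theorem singleδ_eq_of_distTriang {S : ShortComplex C} (hS : S.ShortExact)
    {δ : (singleFunctor C 0).obj S.X₃ ⟶ ((singleFunctor C 0).obj S.X₁)⟦(1 : ℤ)⟧}
    (hT : Triangle.mk ((singleFunctor C 0).map S.f) ((singleFunctor C 0).map S.g) δ ∈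
      distTriang (DerivedCategory C)) : hS.singleδ = δ := by
  let F := singleFunctor C 0
  obtain ⟨c, hc₂, hc₃⟩ : ∃ c : F.obj S.X₃ ⟶ F.obj S.X₃,
      F.map S.g ≫ c = 𝟙 _ ≫ F.map S.g ∧ hS.singleδ ≫ (𝟙 (F.obj S.X₁))⟦(1 : ℤ)⟧' = c ≫ δ :=
    complete_distinguished_triangle_morphism _ _ hS.singleTriangle_distinguished hT
      (𝟙 _) (𝟙 _) ((comp_id _).trans (id_comp _).symm)
  obtain ⟨c, rfl⟩ := F.map_surjective c
  have hc : c = 𝟙 _ := by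
    have := hS.epi_g
    refine (cancel_epi S.g).1 (F.map_injective ?_)
    rw [F.map_comp, hc₂, id_comp, comp_id]
  rwa [hc, CategoryTheory.Functor.map_id, CategoryTheory.Functor.map_id, comp_id, id_comp] at hc₃

theorem exists_distTriang_singleFunctor {X Z : C}
    (δ : (singleFunctor C 0).obj Z ⟶ ((singleFunctor C 0).obj X)⟦(1 : ℤ)⟧) :
    ∃ (E : C) (i : X ⟶ E) (p : E ⟶ Z),
      Triangle.mk ((singleFunctor C 0).map i) ((singleFunctor C 0).map p) δ ∈
        distTriang (DerivedCategory C) := by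
  obtain ⟨K, f, g, hT⟩ := distinguished_cocone_triangle₂ δ
  have : K.IsGE 0 := TStructure.t.isGE₂ _ hT 0
    (inferInstanceAs (((singleFunctor C 0).obj X).IsGE 0))
    (inferInstanceAs (((singleFunctor C 0).obj Z).IsGE 0))
  have : K.IsLE 0 := TStructure.t.isLE₂ _ hT 0
    (inferInstanceAs (((singleFunctor C 0).obj X).IsLE 0))
    (inferInstanceAs (((singleFunctor C 0).obj Z).IsLE 0))
  obtain ⟨E, ⟨e⟩⟩ := K.exists_iso_singleFunctor_obj_of_isGE_of_isLE 0
  obtain ⟨i, hi⟩ := (singleFunctor C 0).map_surjective (f ≫ e.hom)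
  obtain ⟨p, hp⟩ := (singleFunctor C 0).map_surjective (e.inv ≫ g)
  exact ⟨E, i, p, isomorphic_distinguished _ hT _
    (Triangle.isoMk _ _ (Iso.refl _) e.symm (Iso.refl _)
      (show (singleFunctor C 0).map i ≫ e.inv = 𝟙 _ ≫ f by simp [hi])
      (show (singleFunctor C 0).map p ≫ 𝟙 _ = e.inv ≫ g by simp [hp])
      (show δ ≫ (𝟙 _)⟦(1 : ℤ)⟧' = 𝟙 _ ≫ δ by simp))⟩

end DerivedCategory

variable [HasExt.{w} C]

theorem exists_extClass_eq {X Z : C} (x : Abelian.Ext Z X 1) :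
    ∃ (E : C) (i : X ⟶ E) (p : E ⟶ Z) (zero : i ≫ p = 0)
      (hS : (ShortComplex.mk i p zero).ShortExact), hS.extClass = x := by
  let := HasDerivedCategory.standard C
  obtain ⟨E, i, p, hT⟩ := exists_distTriang_singleFunctor x.hom
  have zero : i ≫ p = 0 := (singleFunctor C 0).map_injective (by
    rw [Functor.map_comp, Functor.map_zero]
    exact comp_distTriang_mor_zero₁₂ _ hT)
  have hS : (ShortComplex.mk i p zero).ShortExact := shortExact_of_distTriang_singleFunctor hT
  exact ⟨E, i, p, zero, hS,
    Abelian.Ext.ext (hS.extClass_hom.trans (singleδ_eq_of_distTriang hS hT))⟩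

theorem exists_retraction_of_extClass_eq_zero {S : ShortComplex C} (hS : S.ShortExact)
    (h₀ : hS.extClass = 0) : ∃ r : S.X₂ ⟶ S.X₁, S.f ≫ r = 𝟙 S.X₁ := by
  obtain ⟨r, hr⟩ := Abelian.Ext.contravariant_sequence_exact₁ hS S.X₁
    (Abelian.Ext.mk₀ (𝟙 S.X₁)) (add_zero 1) (by rw [h₀, Abelian.Ext.zero_comp])
  obtain ⟨r, rfl⟩ := (Abelian.Ext.mk₀_bijective _ _).2 r
  rw [Abelian.Ext.mk₀_comp_mk₀] at hr
  exact ⟨r, (Abelian.Ext.mk₀_bijective _ _).1 hr⟩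

end YonedaExtension

theorem map_shift_eq_zero {C D M : Type*} [Category C] [Category D] [HasZeroMorphisms C]
    [HasZeroMorphisms D] [AddMonoid M] [HasShift C M] [HasShift D M] (F : C ⥤ D) [F.CommShift M]
    (a : M) [(shiftFunctor D a).PreservesZeroMorphisms] {X Y : C} {f : X ⟶ Y}
    (hf : F.map f = 0) : F.map (f⟦a⟧') = 0 := by
  rw [← cancel_mono ((F.commShiftIso a).hom.app Y), F.commShiftIso_hom_naturality, hf,
    Functor.map_zero, comp_zero, zero_comp]

section ConeClass

variable (h : T ⥤ A) [h.IsHomological]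

/-- The complex `h(Y) ⟶ h(C) ⟶ h(X⟦1⟧)` obtained by applying a homological functor `h` to a
distinguished triangle `X ⟶ Y ⟶ C ⟶ X⟦1⟧`. -/
abbrev coneShortComplex {X Y C : T} {f : X ⟶ Y} {i : Y ⟶ C} {p : C ⟶ X⟦(1 : ℤ)⟧}
    (hT : Triangle.mk f i p ∈ distTriang T) : ShortComplex A :=
  .mk (h.map i) (h.map p) (by
    rw [← h.map_comp, show i ≫ p = 0 from comp_distTriang_mor_zero₂₃ _ hT, h.map_zero])

variable [h.CommShift ℤ] {X Y : T}

theorem shortExact_coneShortComplex {C : T} {f : X ⟶ Y} {i : Y ⟶ C} {p : C ⟶ X⟦(1 : ℤ)⟧}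
    (hT : Triangle.mk f i p ∈ distTriang T) (hf : h.map f = 0) :
    (coneShortComplex h hT).ShortExact := by
  have hrot := rot_of_distTriang _ hT
  refine .mk' (h.map_distinguished_exact _ hrot)
    ((h.map_distinguished_exact _ hT).mono_g hf)
    ((h.map_distinguished_exact _ (rot_of_distTriang _ hrot)).epi_f ?_)
  change h.map (-f⟦(1 : ℤ)⟧') = 0
  rw [h.map_neg, map_shift_eq_zero h 1 hf, neg_zero]

variable [HasExt.{w} A]

theorem extClass_coneShortComplex_naturality {X' Y' C C' : T}
    {f : X ⟶ Y} {i : Y ⟶ C} {p : C ⟶ X⟦(1 : ℤ)⟧}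
    {f' : X' ⟶ Y'} {i' : Y' ⟶ C'} {p' : C' ⟶ X'⟦(1 : ℤ)⟧}
    (hT : Triangle.mk f i p ∈ distTriang T) (hT' : Triangle.mk f' i' p' ∈ distTriang T)
    (hf : h.map f = 0) (hf' : h.map f' = 0) (a : X ⟶ X') (b : Y ⟶ Y') (comm : f ≫ b = a ≫ f') :
    (shortExact_coneShortComplex h hT hf).extClass.comp (Abelian.Ext.mk₀ (h.map b)) (add_zero 1) =
      (Abelian.Ext.mk₀ (h.map (a⟦(1 : ℤ)⟧'))).comp
        (shortExact_coneShortComplex h hT' hf').extClass (zero_add 1) := by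
  obtain ⟨c, hic, hcp⟩ : ∃ c : C ⟶ C', i ≫ c = b ≫ i' ∧ p ≫ a⟦1⟧' = c ≫ p' :=
    complete_distinguished_triangle_morphism _ _ hT hT' a b comm
  let φ : coneShortComplex h hT ⟶ coneShortComplex h hT' :=
    { τ₁ := h.map b
      τ₂ := h.map c
      τ₃ := h.map (a⟦(1 : ℤ)⟧')
      comm₁₂ := by simp only [← h.map_comp, hic]
      comm₂₃ := by simp only [← h.map_comp, hcp] }
  exact ShortComplex.ShortExact.extClass_naturality (shortExact_coneShortComplex h hT hf)
    (shortExact_coneShortComplex h hT' hf') φ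

/-- The class of the extension `0 ⟶ h(Y) ⟶ h(C) ⟶ h(X⟦1⟧) ⟶ 0` given by a cone `C` of a morphism
`f : X ⟶ Y` with `h(f) = 0`.  The cone is chosen; see `coneClass_eq_extClass` for the independence
of the choice. -/
noncomputable def coneClass (f : X ⟶ Y) (hf : h.map f = 0) :
    Abelian.Ext (h.obj (X⟦(1 : ℤ)⟧)) (h.obj Y) 1 :=
  (shortExact_coneShortComplex h
    (distinguished_cocone_triangle f).choose_spec.choose_spec.choose_spec hf).extClass

theorem coneClass_eq_extClass {C : T} {f : X ⟶ Y} {i : Y ⟶ C} {p : C ⟶ X⟦(1 : ℤ)⟧}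
    (hT : Triangle.mk f i p ∈ distTriang T) (hf : h.map f = 0) :
    coneClass h f hf = (shortExact_coneShortComplex h hT hf).extClass := by
  simpa using! extClass_coneShortComplex_naturality h
    (distinguished_cocone_triangle f).choose_spec.choose_spec.choose_spec hT hf hf (𝟙 X) (𝟙 Y)
    (by simp)

theorem coneClass_eq_mk₀_comp {X' : T} {f : X ⟶ Y} {f' : X' ⟶ Y} (hf : h.map f = 0)
    (hf' : h.map f' = 0) (a : X ⟶ X') (comm : f = a ≫ f') :
    coneClass h f hf =
      (Abelian.Ext.mk₀ (h.map (a⟦(1 : ℤ)⟧'))).comp (coneClass h f' hf') (zero_add 1) := by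
  simpa using! extClass_coneShortComplex_naturality h
    (distinguished_cocone_triangle f).choose_spec.choose_spec.choose_spec
    (distinguished_cocone_triangle f').choose_spec.choose_spec.choose_spec hf hf' a (𝟙 Y)
    (by simpa using comm)

theorem coneClass_add {f g : X ⟶ Y} (hf : h.map f = 0) (hg : h.map g = 0)
    (hfg : h.map (f + g) = 0) :
    coneClass h (f + g) hfg = coneClass h f hf + coneClass h g hg := by
  have hdesc : h.map (biprod.desc f g) = 0 := by
    simp only [biprod.desc_eq, h.map_add, h.map_comp, hf, hg, comp_zero, add_zero]
  rw [coneClass_eq_mk₀_comp h hf hdesc biprod.inl (by simp),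
    coneClass_eq_mk₀_comp h hg hdesc biprod.inr (by simp),
    coneClass_eq_mk₀_comp h hfg hdesc (biprod.inl + biprod.inr) (by simp),
    Functor.map_add, h.map_add, Abelian.Ext.mk₀_add, Abelian.Ext.add_comp]

theorem eq_zero_of_coneClass_eq_zero [h.ReflectsIsomorphisms] [h.Full] {f : X ⟶ Y}
    {hf : h.map f = 0} (h₀ : coneClass h f hf = 0) : f = 0 := by
  obtain ⟨C, i, p, hT⟩ := distinguished_cocone_triangle f
  rw [coneClass_eq_extClass h hT] at h₀
  obtain ⟨r, hr⟩ : ∃ r : h.obj C ⟶ h.obj Y, h.map i ≫ r = 𝟙 _ :=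
    exists_retraction_of_extClass_eq_zero _ h₀
  obtain ⟨r, rfl⟩ := h.map_surjective r
  have : IsIso (h.map (i ≫ r)) := by
    rw [h.map_comp, hr]
    infer_instance
  have : IsIso (i ≫ r) := isIso_of_reflects_iso _ h
  have : Mono i := mono_of_mono i r
  exact zero_of_comp_mono i (comp_distTriang_mor_zero₁₂ _ hT)

theorem exists_coneClass_eq [h.Full] [h.essImage.IsClosedUnderExtensions]
    (x : Abelian.Ext (h.obj (X⟦(1 : ℤ)⟧)) (h.obj Y) 1) :
    ∃ (f : X ⟶ Y) (hf : h.map f = 0), coneClass h f hf = x := by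
  obtain ⟨E, j, q, zero, hS, rfl⟩ := exists_extClass_eq x
  obtain ⟨C, ⟨e⟩⟩ : h.essImage E :=
    h.essImage.prop_X₂_of_shortExact hS (h.obj_mem_essImage _) (h.obj_mem_essImage _)
  obtain ⟨i, hi⟩ := h.map_surjective (j ≫ e.inv)
  obtain ⟨X', f, p, hT⟩ := distinguished_cocone_triangle₁ i
  have : Mono (h.map i) := by
    have : Mono j := hS.mono_f
    rw [hi]
    infer_instance
  have hf : h.map f = 0 := zero_of_comp_mono (h.map i) (by
    rw [← h.map_comp, show f ≫ i = 0 from comp_distTriang_mor_zero₁₂ _ hT, h.map_zero])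
  have : Epi q := hS.epi_g
  obtain ⟨c, hc⟩ : ∃ c : h.obj (X⟦(1 : ℤ)⟧) ⟶ h.obj (X'⟦(1 : ℤ)⟧), q ≫ c = e.inv ≫ h.map p :=
    ⟨hS.exact.desc (e.inv ≫ h.map p) (by
      rw [← assoc, ← hi]
      exact (coneShortComplex h hT).zero), hS.exact.g_desc _ _⟩
  obtain ⟨c, rfl⟩ := h.map_surjective c
  obtain ⟨a, rfl⟩ := (shiftFunctor T (1 : ℤ)).map_surjective c
  have haf : h.map (a ≫ f) = 0 := by rw [h.map_comp, hf, comp_zero]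
  refine ⟨a ≫ f, haf, ?_⟩
  rw [coneClass_eq_mk₀_comp h haf hf a rfl, coneClass_eq_extClass h hT]
  let φ : ShortComplex.mk j q zero ⟶ coneShortComplex h hT :=
    { τ₁ := 𝟙 (h.obj Y)
      τ₂ := e.inv
      τ₃ := h.map (a⟦(1 : ℤ)⟧')
      comm₁₂ := (id_comp _).trans hi
      comm₂₃ := hc.symm }
  exact (ShortComplex.ShortExact.extClass_naturality hS
    (shortExact_coneShortComplex h hT hf) φ).symm.trans (Abelian.Ext.comp_mk₀_id _)

/-- The homomorphism sending `f` with `h(f) = 0` to the class of the extension of `h(X⟦1⟧)` by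
`h(Y)` given by its cone. -/
noncomputable def coneClassHom (X Y : T) :
    (homologyMapHom h X Y).ker →+ Abelian.Ext (h.obj (X⟦(1 : ℤ)⟧)) (h.obj Y) 1 :=
  AddMonoidHom.mk' (fun f => coneClass h f.1 f.2) (fun f g => coneClass_add h f.2 g.2 (f + g).2)

theorem coneClassHom_bijective [h.ReflectsIsomorphisms] [h.Full]
    [h.essImage.IsClosedUnderExtensions] (X Y : T) :
    Function.Bijective (coneClassHom h X Y) := by
  refine ⟨(injective_iff_map_eq_zero _).2 fun f hf => ?_, fun x => ?_⟩
  · exact Subtype.ext (eq_zero_of_coneClass_eq_zero h (hf := f.2) hf)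
  · obtain ⟨f, hf, hx⟩ := exists_coneClass_eq h x
    exact ⟨⟨f, hf⟩, hx⟩

end ConeClass

/-- Let `h` be a homology theory that reflects isomorphisms, is full, and
realizes middle terms of extensions whose outer terms are realized.  Then for all `X, Y`
there is a short exact sequence of abelian groups
`0 ⟶ Ext¹(h(X)⟦1⟧, h(Y)) ⟶ Hom_𝒯(X,Y) ⟶ Hom_𝒜(h(X),h(Y)) ⟶ 0`
where the right-hand map is `f ↦ h(f)`: this map is a surjective group homomorphism whose
kernel is isomorphic to `Ext¹(h(X)⟦1⟧, h(Y))`. -/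
theorem universal_coefficient_exact_sequence [HasExt.{w} A]
    (h : T ⥤ A) [h.Additive] [h.CommShift ℤ] [h.IsHomological]
    [h.ReflectsIsomorphisms] [h.Full]
    (hiii : ∀ S : ShortComplex A, S.ShortExact →
      (∃ X : T, Nonempty (S.X₁ ≅ h.obj X)) → (∃ Z : T, Nonempty (S.X₃ ≅ h.obj Z)) →
      ∃ Y : T, Nonempty (S.X₂ ≅ h.obj Y))
    (X Y : T) :
    Function.Surjective (homologyMapHom h X Y) ∧
      Nonempty ((homologyMapHom h X Y).ker ≃+
        Abelian.Ext ((h.obj X)⟦(1:ℤ)⟧) (h.obj Y) 1) := by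
  have : h.essImage.IsClosedUnderExtensions :=
    ⟨fun hS ⟨X₁, ⟨e₁⟩⟩ ⟨X₃, ⟨e₃⟩⟩ =>
      let ⟨X₂, ⟨e₂⟩⟩ := hiii _ hS ⟨X₁, ⟨e₁.symm⟩⟩ ⟨X₃, ⟨e₃.symm⟩⟩
      ⟨X₂, ⟨e₂.symm⟩⟩⟩
  let shiftIso : (h.obj X)⟦(1 : ℤ)⟧ ≅ h.obj (X⟦(1 : ℤ)⟧) := ((h.commShiftIso (1 : ℤ)).app X).symm
  let extIso : Abelian.Ext (h.obj (X⟦(1 : ℤ)⟧)) (h.obj Y) 1 ≃+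
      Abelian.Ext ((h.obj X)⟦(1 : ℤ)⟧) (h.obj Y) 1 :=
    (((Abelian.extFunctor 1).mapIso shiftIso.op).app (h.obj Y)).addCommGroupIsoToAddEquiv
  exact ⟨h.map_surjective,
    ⟨(AddEquiv.ofBijective _ (coneClassHom_bijective h X Y)).trans extIso⟩⟩
end

section
/- Let h : 𝒯 → 𝒜 be a homology theory that reflects isomorphisms, is full, and is essentially surjective (for every object x of 𝒜 there is an object X of 𝒯 with h(X) ≅ x). Then 𝒜 is hereditary: for every exact sequence 0 → u →α v →β w →γ x → 0 in 𝒜 there exist an object z of 𝒜 and morphisms v → z, z → x, z → w such that 0 → v → z → x → 0 is a short exact sequence and the diagram with rows 0 → v → z → x → 0 and 0 → u →α v →β w →γ x → 0, vertical maps id_v : v → v, z → w, and id_x : x → x, commutes. Equivalently, Ext²_𝒜(x, y) = 0 for all objects x, y of 𝒜. -/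
open CategoryTheory Category Limits Pretriangulated

universe w

/-!
Lift `v ⟶ w` to a morphism `f : V ⟶ W` of `T` and complete it to a distinguished triangle
`V ⟶ W ⟶ C ⟶ V⟦1⟧`.  Exactness makes `x`, the cokernel of `v ⟶ w`, a subobject of `h C`, and the
inclusion lifts to some `k : X ⟶ C`.  The composite `X ⟶ C ⟶ V⟦1⟧` is killed by `h`, because it
factors over `h W ⟶ h C ⟶ h V⟦1⟧`; hence `h` turns the triangle `V ⟶ Z ⟶ X ⟶ V⟦1⟧` on this
composite into a short exact sequence, which maps to `v ⟶ w ⟶ x`.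

In terms of `Ext`, this says that `Ext¹(x, -)` preserves epimorphisms.  As every class of
`Extⁿ⁺²(x, y)` is a product of some `ε` in `Ext¹(x, K)` and `η` in `Extⁿ⁺¹(K, y)`, and `η` vanishes
after restriction along an epimorphism `Q ⟶ K`, lifting `ε` to `Ext¹(x, Q)` shows that the product
vanishes.
-/

section YonedaTrivial

variable {A : Type*} [Category A] [Abelian A]

/-- An exact sequence `v ⟶ w ⟶ x ⟶ 0`, seen as a short complex `S`, is *Yoneda trivial* if some
short exact sequence `0 ⟶ v ⟶ z ⟶ x ⟶ 0` maps to it by isomorphisms at the ends.  When `S` is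
completed on the left by the kernel of `S.f`, this says that the resulting two-fold extension has
trivial class.  Isomorphisms rather than identities at the ends make the notion invariant under
isomorphisms of short complexes. -/
def IsYonedaTrivial (S : ShortComplex A) : Prop :=
  ∃ (E : ShortComplex A) (φ : E ⟶ S), E.ShortExact ∧ IsIso φ.τ₁ ∧ IsIso φ.τ₃

variable (A) in
/-- An abelian category is *hereditary* if all its two-fold Yoneda extensions are trivial. -/
def IsHereditary : Prop :=
  ∀ S : ShortComplex A, S.Exact → Epi S.g → IsYonedaTrivial S

lemma IsYonedaTrivial.of_iso {S S' : ShortComplex A} (hS : IsYonedaTrivial S) (e : S ≅ S') :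
    IsYonedaTrivial S' := by
  obtain ⟨E, φ, hE, _, _⟩ := hS
  exact ⟨E, φ ≫ e.hom, hE, by dsimp; infer_instance, by dsimp; infer_instance⟩

lemma IsYonedaTrivial.exists_eq {S : ShortComplex A} (hS : IsYonedaTrivial S) :
    ∃ (z : A) (σ : S.X₁ ⟶ z) (τ : z ⟶ S.X₃) (δ : z ⟶ S.X₂) (w : σ ≫ τ = 0),
      (ShortComplex.mk σ τ w).ShortExact ∧ σ ≫ δ = S.f ∧ δ ≫ S.g = τ := by
  obtain ⟨E, φ, hE, _, _⟩ := hS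
  have w : (inv φ.τ₁ ≫ E.f) ≫ E.g ≫ φ.τ₃ = 0 := by simp
  let e : E ≅ ShortComplex.mk (inv φ.τ₁ ≫ E.f) (E.g ≫ φ.τ₃) w :=
    ShortComplex.isoMk (asIso φ.τ₁) (Iso.refl _) (asIso φ.τ₃)
  exact ⟨E.X₂, _, _, φ.τ₂, w, ShortComplex.shortExact_of_iso e hE, by simp [← φ.comm₁₂],
    φ.comm₂₃⟩

lemma mono_exact_desc {S : ShortComplex A} (hS : S.Exact) [Epi S.g] {y : A} (g : S.X₂ ⟶ y)
    (w : S.f ≫ g = 0) (hg : (ShortComplex.mk S.f g w).Exact) :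
    Mono (hS.desc g w) := by
  have : Mono (cokernel.desc S.f g w) := hg.mono_cokernelDesc
  let e : S.X₃ ≅ cokernel S.f := hS.gIsCokernel.coconePointUniqueUpToIso (colimit.isColimit _)
  have he : S.g ≫ e.hom = cokernel.π S.f :=
    hS.gIsCokernel.comp_coconePointUniqueUpToIso_hom (colimit.isColimit _) .one
  have : hS.desc g w = e.hom ≫ cokernel.desc S.f g w := by
    simp [← cancel_epi S.g, reassoc_of% he]
  rw [this]
  infer_instance

end YonedaTrivial

section HomologyTheory

lemma map_shift_map_eq_zero {C D : Type*} [Category C] [Category D] [HasZeroMorphisms D]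
    {M : Type*} [AddGroup M] [HasShift C M] [HasShift D M] (F : C ⥤ D) [F.CommShift M] {X Y : C}
    (f : X ⟶ Y) (hf : F.map f = 0) (n : M) : F.map (f⟦n⟧') = 0 := by
  rw [← cancel_mono ((F.commShiftIso n).hom.app Y), F.commShiftIso_hom_naturality, hf,
    Functor.map_zero, comp_zero, zero_comp]

variable {T : Type*} [Category T] [HasZeroObject T] [Preadditive T] [HasShift T ℤ]
  [∀ n : ℤ, (shiftFunctor T n).Additive] [Pretriangulated T]

lemma exists_distinguished_base_change {V W C X : T} {f : V ⟶ W} {g : W ⟶ C} {d : C ⟶ V⟦(1 : ℤ)⟧}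
    (hD : Triangle.mk f g d ∈ distTriang T) (k : X ⟶ C) :
    ∃ (Z : T) (σ : V ⟶ Z) (τ : Z ⟶ X) (δ : Z ⟶ W),
      Triangle.mk σ τ (k ≫ d) ∈ distTriang T ∧ σ ≫ δ = f ∧ δ ≫ g = τ ≫ k := by
  obtain ⟨Z, σ, τ, hZ⟩ := distinguished_cocone_triangle₂ (k ≫ d)
  obtain ⟨δ, hσ, hτ⟩ := complete_distinguished_triangle_morphism₂ _ _ hZ hD (𝟙 V) k
    ((congrArg ((k ≫ d) ≫ ·) ((shiftFunctor T (1 : ℤ)).map_id V)).trans (comp_id _))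
  exact ⟨Z, σ, τ, δ, hZ, hσ.trans (id_comp f), hτ.symm⟩

variable {A : Type*} [Category A] [Abelian A] [HasShift A ℤ]
  (h : T ⥤ A) [h.CommShift ℤ] [h.IsHomological]

lemma map_shortExact_of_map_mor₃_eq_zero (D : Triangle T) (hD : D ∈ distTriang T)
    (h₃ : h.map D.mor₃ = 0) : ((shortComplexOfDistTriangle D hD).map h).ShortExact where
  exact := h.map_distinguished_exact D hD
  mono_f := by
    refine (h.map_distinguished_exact _ (inv_rot_of_distTriang D hD)).mono_g ?_
    have h₃' {Y : T} (ψ : D.obj₁⟦(1 : ℤ)⟧⟦(-1 : ℤ)⟧ ⟶ Y) :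
        h.map (-(D.mor₃⟦(-1 : ℤ)⟧' ≫ ψ)) = 0 := by
      rw [h.map_neg, h.map_comp, map_shift_map_eq_zero h D.mor₃ h₃, zero_comp, neg_zero]
    exact h₃' _
  epi_g := (h.map_distinguished_exact _ (rot_of_distTriang D hD)).epi_f h₃

lemma isYonedaTrivial_map [h.Full] {V W X : T} (f : V ⟶ W) (γ : h.obj W ⟶ h.obj X) [Epi γ]
    (w : h.map f ≫ γ = 0) (hfγ : (ShortComplex.mk (h.map f) γ w).Exact) :
    IsYonedaTrivial (ShortComplex.mk (h.map f) γ w) := by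
  obtain ⟨C, g, d, hD⟩ := distinguished_cocone_triangle f
  have hfg : (ShortComplex.mk (h.map f) (h.map g) _).Exact := h.map_distinguished_exact _ hD
  obtain ⟨ι, _, hι⟩ : ∃ ι : h.obj X ⟶ h.obj C, Mono ι ∧ γ ≫ ι = h.map g :=
    have : Epi (ShortComplex.mk (h.map f) γ w).g := ‹Epi γ›
    ⟨_, mono_exact_desc hfγ _ _ hfg, hfγ.g_desc _ _⟩
  obtain ⟨k, rfl⟩ := h.map_surjective ι
  have hkd : h.map (k ≫ d) = 0 := by
    have hgd : g ≫ d = 0 := comp_distTriang_mor_zero₂₃ _ hD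
    rw [← cancel_epi γ, h.map_comp, reassoc_of% hι, ← h.map_comp, hgd, h.map_zero, comp_zero]
  obtain ⟨Z, σ, τ, δ, hZ, hσδ, hδg⟩ := exists_distinguished_base_change hD k
  have hδγ : h.map δ ≫ γ = h.map τ := by
    rw [← cancel_mono (h.map k), assoc, hι, ← h.map_comp, hδg, h.map_comp]
  let φ : (shortComplexOfDistTriangle _ hZ).map h ⟶ ShortComplex.mk (h.map f) γ w :=
    { τ₁ := 𝟙 (h.obj V)
      τ₂ := h.map δ
      τ₃ := 𝟙 (h.obj X)
      comm₁₂ := (id_comp _).trans ((congrArg h.map hσδ.symm).trans (h.map_comp σ δ))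
      comm₂₃ := hδγ.trans (comp_id _).symm }
  exact ⟨_, φ, map_shortExact_of_map_mor₃_eq_zero h _ hZ hkd,
    inferInstanceAs (IsIso (𝟙 _)), inferInstanceAs (IsIso (𝟙 _))⟩

theorem hereditary_of_homology_theory_general [h.Full] [h.EssSurj] : IsHereditary A := by
  intro S hS _
  let e₁ := h.objObjPreimageIso S.X₁
  let e₂ := h.objObjPreimageIso S.X₂
  let e₃ := h.objObjPreimageIso S.X₃
  obtain ⟨f, hf⟩ := h.map_surjective (e₁.hom ≫ S.f ≫ e₂.inv)
  let γ := e₂.hom ≫ S.g ≫ e₃.inv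
  have w : h.map f ≫ γ = 0 := by simp [hf, γ]
  let e : ShortComplex.mk (h.map f) γ w ≅ S :=
    ShortComplex.isoMk e₁ e₂ e₃ (by simp [hf]) (by simp [γ])
  exact (isYonedaTrivial_map h f γ w (ShortComplex.exact_of_iso e.symm hS)).of_iso e

end HomologyTheory

section Ext

open Abelian HomologicalComplex DerivedCategory

variable {A : Type*} [Category A] [Abelian A]

lemma exists_epi_single_map_eq_comp {ι : Type*} [DecidableEq ι] {c : ComplexShape ι} {i : ι}
    {x : A} {K : HomologicalComplex A c} (s : K ⟶ (single A c i).obj x) (hs : QuasiIsoAt s i) :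
    ∃ (P : A) (p : P ⟶ x) (j : (single A c i).obj P ⟶ K),
      Epi p ∧ (single A c i).map p = j ≫ s := by
  let p := cyclesMap s i ≫ (singleObjCyclesSelfIso c i x).hom
  have hp : p = K.homologyπ i ≫ homologyMap s i ≫ (singleObjHomologySelfIso c i x).hom := by
    simp [p]
  refine ⟨K.cycles i, p, mkHomFromSingle (K.iCycles i) (by simp), ?_, ?_⟩
  · rw [hp]
    infer_instance
  · apply from_single_hom_ext
    simp [p, single_map_f_self, singleObjCyclesSelfIso_hom]

lemma exists_epi_Q_single_map_comp_eq_zero [HasDerivedCategory.{w} A] {i : ℤ} {x : A}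
    {L : CochainComplex A ℤ} (hL : IsZero (L.X i))
    (φ : Q.obj ((CochainComplex.singleFunctor A i).obj x) ⟶ Q.obj L) :
    ∃ (P : A) (p : P ⟶ x), Epi p ∧
      Q.map ((CochainComplex.singleFunctor A i).map p) ≫ φ = 0 := by
  obtain ⟨K, s, hs, g, rfl⟩ := right_fac φ
  rw [isIso_Q_map_iff_quasiIso] at hs
  obtain ⟨P, p, j, hp, hj⟩ : ∃ (P : A) (p : P ⟶ x)
      (j : (CochainComplex.singleFunctor A i).obj P ⟶ K),
      Epi p ∧ (CochainComplex.singleFunctor A i).map p = j ≫ s :=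
    exists_epi_single_map_eq_comp s (hs.quasiIsoAt i)
  have hjg : j ≫ g = 0 := from_single_hom_ext (hL.eq_of_tgt _ _)
  refine ⟨P, p, hp, ?_⟩
  rw [hj, Functor.map_comp, assoc, IsIso.hom_inv_id_assoc, ← Functor.map_comp, hjg,
    Functor.map_zero]

variable [HasExt.{w} A]

lemma exists_epi_mk₀_comp_eq_zero {x y : A} {n : ℕ} (e : Ext x y (n + 1)) :
    ∃ (P : A) (p : P ⟶ x), Epi p ∧ (Ext.mk₀ p).comp e (zero_add _) = 0 := by
  let := HasDerivedCategory.standard A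
  let i := ((singleFunctors A).shiftIso (n + 1 : ℤ) (-(n + 1)) 0 (by lia)).app y
  obtain ⟨P, p, hp, hpe⟩ := exists_epi_Q_single_map_comp_eq_zero
    (isZero_single_obj_X (ComplexShape.up ℤ) (-(n + 1) : ℤ) y 0 (by lia))
    (e.hom ≫ i.hom)
  refine ⟨P, p, hp, ?_⟩
  ext
  rw [Ext.comp_hom, Ext.mk₀_hom, ShiftedHom.mk₀_comp, Ext.zero_hom, ← cancel_mono i.hom,
    zero_comp, assoc]
  exact hpe

lemma IsHereditary.exists_comp_mk₀_eq_extClass (hA : IsHereditary A) {S : ShortComplex A}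
    (hS : S.ShortExact) {Q : A} (q : Q ⟶ S.X₁) [Epi q] :
    ∃ ε : Ext S.X₃ Q 1, ε.comp (Ext.mk₀ q) (add_zero 1) = hS.extClass := by
  let R := ShortComplex.mk (q ≫ S.f) S.g (by simp)
  have hR : R.Exact := by
    let ρ : R ⟶ S := { τ₁ := q, τ₂ := 𝟙 _, τ₃ := 𝟙 _ }
    have : Epi ρ.τ₁ := ‹Epi q›
    have : IsIso ρ.τ₂ := inferInstanceAs (IsIso (𝟙 _))
    have : Mono ρ.τ₃ := inferInstanceAs (Mono (𝟙 _))
    exact (ShortComplex.exact_iff_of_epi_of_isIso_of_mono ρ).2 hS.exact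
  obtain ⟨z, σ, τ, δ, w, hE, hσδ, hδτ⟩ := (hA R hR hS.epi_g).exists_eq
  let φ : ShortComplex.mk σ τ w ⟶ S :=
    { τ₁ := q, τ₂ := δ, τ₃ := 𝟙 _, comm₁₂ := hσδ.symm, comm₂₃ := hδτ.trans (comp_id τ).symm }
  exact ⟨hE.extClass, (ShortComplex.ShortExact.extClass_naturality hE hS φ).trans
    (Ext.mk₀_id_comp _)⟩

theorem IsHereditary.ext_eq_zero (hA : IsHereditary A) {x y : A} {n : ℕ}
    (e : Ext x y (n + 2)) : e = 0 := by
  obtain ⟨P, p, _, hpe⟩ := exists_epi_mk₀_comp_eq_zero e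
  have hS : (ShortComplex.mk (kernel.ι p) p (kernel.condition p)).ShortExact :=
    { exact := ShortComplex.exact_kernel p }
  obtain ⟨η, rfl⟩ := Ext.contravariant_sequence_exact₃ hS y e hpe (add_comm 1 (n + 1))
  obtain ⟨Q, q, _, hqη⟩ := exists_epi_mk₀_comp_eq_zero η
  obtain ⟨ε, hε⟩ := hA.exists_comp_mk₀_eq_extClass hS q
  rw [← hε, Ext.comp_assoc_of_second_deg_zero, hqη, Ext.comp_zero]

end Ext

/-- Let `h : 𝒯 ⥤ 𝒜` be a homology theory that reflects isomorphisms, is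
full, and is essentially surjective.  Then `𝒜` is hereditary: every two-fold extension
`0 ⟶ u ⟶α v ⟶β w ⟶γ x ⟶ 0` fits in a commutative diagram with exact rows
`0 ⟶ v ⟶ z ⟶ x ⟶ 0` (top) and `0 ⟶ u ⟶ v ⟶ w ⟶ x ⟶ 0` (bottom), with vertical maps
`id_v`, `z ⟶ w` and `id_x`.  Equivalently, `Ext²_𝒜(x, y) = 0` for all `x, y`. -/
theorem hereditary_of_homology_theory
    {T : Type*} [Category T] [HasZeroObject T] [Preadditive T] [HasShift T ℤ]
    [∀ n : ℤ, (shiftFunctor T n).Additive] [Pretriangulated T]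
    {A : Type*} [Category A] [Abelian A] [HasShift A ℤ]
    [∀ n : ℤ, (shiftFunctor A n).Additive] [HasExt.{w} A]
    (h : T ⥤ A) [h.Additive] [h.CommShift ℤ] [h.IsHomological]
    [h.ReflectsIsomorphisms] [h.Full] [h.EssSurj] :
    (∀ (u v w x : A) (α : u ⟶ v) (β : v ⟶ w) (γ : w ⟶ x),
      Mono α → Epi γ →
      ∀ (wαβ : α ≫ β = 0) (wβγ : β ≫ γ = 0),
        (ShortComplex.mk α β wαβ).Exact → (ShortComplex.mk β γ wβγ).Exact →
        ∃ (z : A) (σ : v ⟶ z) (τ : z ⟶ x) (δ : z ⟶ w) (wστ : σ ≫ τ = 0),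
          (ShortComplex.mk σ τ wστ).ShortExact ∧ σ ≫ δ = β ∧ δ ≫ γ = τ) ∧
    (∀ (x y : A) (e : Abelian.Ext x y 2), e = 0) := by
  have hA := hereditary_of_homology_theory_general h
  exact ⟨fun _ _ _ _ _ β γ _ hγ _ wβγ _ hβγ => (hA (.mk β γ wβγ) hβγ hγ).exists_eq,
    fun _ _ e => hA.ext_eq_zero e⟩
end

section
/- Let j : 𝒯 → 𝒯' be a triangulated functor (an additive functor commuting with the shifts and sending distinguished triangles to distinguished triangles) between pretriangulated categories. Assume h' : 𝒯' → 𝒜 is a homology theory that reflects isomorphisms, is full, and is essentially surjective (every object of 𝒜 is isomorphic to h'(X') for some X' in 𝒯'). If the homology theory h = h' ∘ j : 𝒯 → 𝒜 also reflects isomorphisms, is full, and is essentially surjective, then j is an equivalence of categories. -/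
open CategoryTheory Category Limits Pretriangulated

/-!
Call a morphism of `𝒯'` null if `h'` kills it. The composite of two null morphisms
`X ⟶ Y ⟶ Z` is zero: let `E` be the cone of the composite and `C` that of `Y ⟶ Z`. Then
`h' Z ⟶ h' C` is a monomorphism, and a morphism of triangles extending `X ⟶ Y` and `𝟙 Z` gives
`E ⟶ C` whose image under `h'` factors through it. Hence `h' Z ⟶ h' E` is a split monomorphism,
and so is `Z ⟶ E`.

If `j f = 0`, then `j` turns the morphism `i` from the target of `f` to its cone into a split
monomorphism; since `h' ∘ j` is full and reflects isomorphisms, `i` is itself split, hence `f = 0`.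

For the fullness of `j` it is enough to lift a null morphism `f : j X ⟶ j Y`. Using that its cone
lies in the essential image of `j`, one factors `f` as `ψ : j X ⟶ j W` followed by a null morphism
`j w`. As `h' ∘ j` is full, `ψ` agrees with some `j ψ₀` up to a null morphism, and this difference
is killed by composition with `j w`, so that `f = j (ψ₀ ≫ w)`.
-/

section Reflection

variable {C D E : Type*} [Category C] [Category D] [Category E]

lemma isSplitMono_of_isSplitMono_map (F : C ⥤ D) [F.Full] [F.ReflectsIsomorphisms]
    {X Y : C} (i : X ⟶ Y) [IsSplitMono (F.map i)] : IsSplitMono i := by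
  obtain ⟨r, hr⟩ := F.map_surjective (retraction (F.map i))
  have map_comp_eq_id : F.map (i ≫ r) = 𝟙 _ := by
    rw [F.map_comp, hr, IsSplitMono.id]
  have : IsIso (F.map (i ≫ r)) := map_comp_eq_id ▸ inferInstance
  have : IsIso (i ≫ r) := isIso_of_reflects_iso _ F
  exact IsSplitMono.mk' ⟨r ≫ inv (i ≫ r), by rw [← assoc, IsIso.hom_inv_id]⟩

lemma essSurj_of_comp_of_full_of_reflectsIsomorphisms (F : C ⥤ D) (G : D ⥤ E)
    [G.Full] [G.ReflectsIsomorphisms] [(F ⋙ G).EssSurj] : F.EssSurj where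
  mem_essImage Y := by
    obtain ⟨φ, hφ⟩ := G.map_surjective ((F ⋙ G).objObjPreimageIso (G.obj Y)).hom
    have : IsIso (G.map φ) := hφ ▸ inferInstance
    have : IsIso φ := isIso_of_reflects_iso φ G
    exact ⟨_, ⟨asIso φ⟩⟩

end Reflection

lemma map_shift_eq_zero_of_map_eq_zero {C D M : Type*} [Category C] [Category D] [AddMonoid M]
    [HasShift C M] [HasShift D M] [HasZeroMorphisms D] (F : C ⥤ D) [F.CommShift M] (n : M)
    [(shiftFunctor D n).PreservesZeroMorphisms] {X Y : C} {f : X ⟶ Y} (hf : F.map f = 0) :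
    F.map (f⟦n⟧') = 0 := by
  rw [← cancel_mono ((F.commShiftIso n).hom.app Y), F.commShiftIso_hom_naturality, hf,
    Functor.map_zero, comp_zero, zero_comp]

section Pretriangulated

variable {T : Type*} [Category T] [HasZeroObject T] [Preadditive T] [HasShift T ℤ]
  [∀ n : ℤ, (shiftFunctor T n).Additive] [Pretriangulated T]

lemma mor₁_eq_zero_of_isSplitMono_map_mor₂ {D : Type*} [Category D] (F : T ⥤ D) [F.Full]
    [F.ReflectsIsomorphisms] (Δ : Triangle T) (hΔ : Δ ∈ distTriang T)
    (_ : IsSplitMono (F.map Δ.mor₂)) : Δ.mor₁ = 0 :=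
  have := isSplitMono_of_isSplitMono_map F Δ.mor₂
  Δ.mor₁_eq_zero_of_mono₂ hΔ inferInstance

lemma mono_map_mor₂_of_map_mor₁_eq_zero {A : Type*} [Category A] [Abelian A]
    (h : T ⥤ A) [h.IsHomological] (Δ : Triangle T) (hΔ : Δ ∈ distTriang T)
    (hmor₁ : h.map Δ.mor₁ = 0) : Mono (h.map Δ.mor₂) :=
  (h.map_distinguished_exact Δ hΔ).mono_g hmor₁

lemma comp_eq_zero_of_map_shift_eq_zero_of_map_eq_zero {A : Type*} [Category A] [Abelian A]
    (h : T ⥤ A) [h.IsHomological] [h.ReflectsIsomorphisms] [h.Full] {X Y Z : T}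
    {f : X ⟶ Y} {g : Y ⟶ Z} (hf : h.map (f⟦(1 : ℤ)⟧') = 0) (hg : h.map g = 0) :
    f ≫ g = 0 := by
  obtain ⟨E, k, q, hE⟩ := distinguished_cocone_triangle (f ≫ g)
  obtain ⟨C, m, δ, hC⟩ := distinguished_cocone_triangle g
  obtain ⟨c, comm₂, comm₃⟩ :
      ∃ c : E ⟶ C, k ≫ c = 𝟙 Z ≫ m ∧ q ≫ f⟦(1 : ℤ)⟧' = c ≫ δ :=
    complete_distinguished_triangle_morphism _ _ hE hC f (𝟙 Z) (comp_id (f ≫ g))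
  have : Mono (h.map m) := mono_map_mor₂_of_map_mor₁_eq_zero h _ hC hg
  have map_comp_eq_zero : h.map c ≫ h.map δ = 0 := by
    rw [← h.map_comp, ← comm₃, h.map_comp, hf, comp_zero]
  obtain ⟨t, ht⟩ : ∃ t : h.obj E ⟶ h.obj Z, t ≫ h.map m = h.map c := by
    have exact_C := h.map_distinguished_exact _ (rot_of_distTriang _ hC)
    have : Mono ((shortComplexOfDistTriangle _ (rot_of_distTriang _ hC)).map h).f := this
    exact exact_C.lift' (h.map c) map_comp_eq_zero
  have isSplitMono_map_k : IsSplitMono (h.map k) := IsSplitMono.mk' ⟨t, by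
    rw [← cancel_mono (h.map m), assoc, ht, ← h.map_comp, comm₂, id_comp, id_comp]⟩
  exact mor₁_eq_zero_of_isSplitMono_map_mor₂ h _ hE isSplitMono_map_k

lemma comp_eq_zero_of_map_eq_zero {A : Type*} [Category A] [Abelian A] [HasShift A ℤ]
    (h : T ⥤ A) [h.CommShift ℤ] [h.IsHomological] [h.ReflectsIsomorphisms] [h.Full] {X Y Z : T}
    {f : X ⟶ Y} {g : Y ⟶ Z} (hf : h.map f = 0) (hg : h.map g = 0) : f ≫ g = 0 :=
  comp_eq_zero_of_map_shift_eq_zero_of_map_eq_zero h (map_shift_eq_zero_of_map_eq_zero h 1 hf) hg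

lemma comp_eq_comp_of_map_eq_left {A : Type*} [Category A] [Abelian A] [HasShift A ℤ]
    (h : T ⥤ A) [h.CommShift ℤ] [h.IsHomological] [h.ReflectsIsomorphisms] [h.Full] {X Y Z : T}
    {f₁ f₂ : X ⟶ Y} {g : Y ⟶ Z} (hf : h.map f₁ = h.map f₂) (hg : h.map g = 0) :
    f₁ ≫ g = f₂ ≫ g := by
  rw [← sub_eq_zero, ← Preadditive.sub_comp]
  exact comp_eq_zero_of_map_eq_zero h (by rw [h.map_sub, hf, sub_self]) hg

lemma comp_eq_comp_of_map_eq_right {A : Type*} [Category A] [Abelian A] [HasShift A ℤ]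
    (h : T ⥤ A) [h.CommShift ℤ] [h.IsHomological] [h.ReflectsIsomorphisms] [h.Full] {X Y Z : T}
    {f : X ⟶ Y} {g₁ g₂ : Y ⟶ Z} (hf : h.map f = 0) (hg : h.map g₁ = h.map g₂) :
    f ≫ g₁ = f ≫ g₂ := by
  rw [← sub_eq_zero, ← Preadditive.comp_sub]
  exact comp_eq_zero_of_map_eq_zero h hf (by rw [h.map_sub, hg, sub_self])

lemma exists_mono_map_comp_eq_zero_of_map_eq_zero {C A : Type*} [Category C] [Category A]
    [Abelian A] [HasShift A ℤ] (F : C ⥤ T) [F.EssSurj] (h : T ⥤ A) [h.CommShift ℤ]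
    [h.IsHomological] [h.ReflectsIsomorphisms] [h.Full] [(F ⋙ h).Full] {X : T} {Y : C}
    {f : X ⟶ F.obj Y} (hf : h.map f = 0) :
    ∃ (Z : C) (u : Y ⟶ Z), Mono (h.map (F.map u)) ∧ f ≫ F.map u = 0 := by
  obtain ⟨K, i, p, hK⟩ := distinguished_cocone_triangle f
  let e : F.obj (F.objPreimage K) ≅ K := F.objObjPreimageIso K
  have : Mono (h.map i) := mono_map_mor₂_of_map_mor₁_eq_zero h _ hK hf
  obtain ⟨u, hu⟩ := (F ⋙ h).map_surjective (h.map (i ≫ e.inv))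
  replace hu : h.map (F.map u) = h.map (i ≫ e.inv) := hu
  have comp_eq_zero : f ≫ i = 0 := comp_distTriang_mor_zero₁₂ _ hK
  refine ⟨_, u, ?_, ?_⟩
  · rw [hu, h.map_comp]
    infer_instance
  · rw [comp_eq_comp_of_map_eq_right h hf hu, reassoc_of% comp_eq_zero, zero_comp]

variable {T' : Type*} [Category T'] [HasZeroObject T'] [Preadditive T'] [HasShift T' ℤ]
  [∀ n : ℤ, (shiftFunctor T' n).Additive] [Pretriangulated T']
  (j : T ⥤ T') [j.CommShift ℤ] [j.IsTriangulated]

lemma faithful_of_comp_of_full_of_reflectsIsomorphisms {D : Type*} [Category D] (F : T' ⥤ D)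
    [(j ⋙ F).Full] [(j ⋙ F).ReflectsIsomorphisms] : j.Faithful := by
  suffices eq_zero_of_map_eq_zero : ∀ {X Y : T} (f : X ⟶ Y), j.map f = 0 → f = 0 from
    ⟨fun {X Y} f g hfg => sub_eq_zero.1 (eq_zero_of_map_eq_zero (f - g) (by
      rw [j.map_sub, hfg, sub_self]))⟩
  intro X Y f hf
  obtain ⟨C, i, p, hC⟩ := distinguished_cocone_triangle f
  have : Mono (j.map i) := Triangle.mono₂ _ (j.map_distinguished _ hC) hf
  have : IsSplitMono (j.map i) := isSplitMono_of_mono _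
  exact mor₁_eq_zero_of_isSplitMono_map_mor₂ (j ⋙ F) _ hC
    (inferInstanceAs (IsSplitMono (F.map (j.map i))))

variable [j.EssSurj] {A : Type*} [Category A] [Abelian A] [HasShift A ℤ]
  (h' : T' ⥤ A) [h'.CommShift ℤ] [h'.IsHomological] [h'.ReflectsIsomorphisms] [h'.Full]

lemma exists_factorization_of_map_eq_zero [(j ⋙ h').Full] {X' : T'} {Y : T} {f : X' ⟶ j.obj Y}
    (hf : h'.map f = 0) :
    ∃ (W : T) (w : W ⟶ Y) (ψ : X' ⟶ j.obj W), h'.map (j.map w) = 0 ∧ f = ψ ≫ j.map w := by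
  obtain ⟨Z, u, _, hu⟩ := exists_mono_map_comp_eq_zero_of_map_eq_zero j h' hf
  obtain ⟨W, w, p, hW⟩ := distinguished_cocone_triangle₁ u
  obtain ⟨ψ, hψ⟩ := Triangle.coyoneda_exact₂ _ (j.map_distinguished _ hW) f hu
  have comp_eq_zero : w ≫ u = 0 := comp_distTriang_mor_zero₁₂ _ hW
  refine ⟨W, w, ψ, ?_, hψ⟩
  rw [← cancel_mono (h'.map (j.map u)), zero_comp, ← h'.map_comp, ← j.map_comp, comp_eq_zero,
    j.map_zero, h'.map_zero]

lemma exists_map_eq_of_map_eq_zero [(j ⋙ h').Full] {X Y : T} {f : j.obj X ⟶ j.obj Y}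
    (hf : h'.map f = 0) : ∃ f₀ : X ⟶ Y, j.map f₀ = f := by
  obtain ⟨W, w, ψ, hw, rfl⟩ := exists_factorization_of_map_eq_zero j h' hf
  obtain ⟨ψ₀, hψ₀⟩ := (j ⋙ h').map_surjective (h'.map ψ)
  exact ⟨ψ₀ ≫ w, by rw [j.map_comp, comp_eq_comp_of_map_eq_left h' hψ₀ hw]⟩

lemma full_of_comp_of_isHomological [(j ⋙ h').Full] : j.Full where
  map_surjective {X Y} f := by
    obtain ⟨g, hg⟩ := (j ⋙ h').map_surjective (h'.map f)
    replace hg : h'.map (j.map g) = h'.map f := hg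
    obtain ⟨d, hd⟩ := exists_map_eq_of_map_eq_zero j h' (f := f - j.map g) (by
      rw [h'.map_sub, hg, sub_self])
    exact ⟨d + g, by rw [j.map_add, hd, sub_add_cancel]⟩

theorem equivalence_of_homology_theories_general [(j ⋙ h').Full] [(j ⋙ h').ReflectsIsomorphisms] :
    j.IsEquivalence where
  faithful := faithful_of_comp_of_full_of_reflectsIsomorphisms j h'
  full := full_of_comp_of_isHomological j h'

end Pretriangulated

/-- Let `j : 𝒯 ⥤ 𝒯'` be a triangulated functor between pretriangulated
categories and `h' : 𝒯' ⥤ 𝒜` a homology theory that reflects isomorphisms, is full and is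
essentially surjective.  If the homology theory `h = j ⋙ h'` also reflects isomorphisms,
is full and is essentially surjective, then `j` is an equivalence of categories. -/
theorem equivalence_of_homology_theories
    {T : Type*} [Category T] [HasZeroObject T] [Preadditive T] [HasShift T ℤ]
    [∀ n : ℤ, (shiftFunctor T n).Additive] [Pretriangulated T]
    {T' : Type*} [Category T'] [HasZeroObject T'] [Preadditive T'] [HasShift T' ℤ]
    [∀ n : ℤ, (shiftFunctor T' n).Additive] [Pretriangulated T']
    {A : Type*} [Category A] [Abelian A] [HasShift A ℤ]
    [∀ n : ℤ, (shiftFunctor A n).Additive]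
    (j : T ⥤ T') [j.Additive] [j.CommShift ℤ] [j.IsTriangulated]
    (h' : T' ⥤ A) [h'.Additive] [h'.CommShift ℤ] [h'.IsHomological]
    [h'.ReflectsIsomorphisms] [h'.Full] [h'.EssSurj]
    [(j ⋙ h').ReflectsIsomorphisms] [(j ⋙ h').Full] [(j ⋙ h').EssSurj] :
    j.IsEquivalence := by
  have : j.EssSurj := essSurj_of_comp_of_full_of_reflectsIsomorphisms j h'
  exact equivalence_of_homology_theories_general j h'
end
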